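/- Let B ⊂ ℤ^d be a finite set of n positions, let γ > 0 satisfy (2d+1)·γ ≤ 1/100, and let Ξ be a fixed real symmetric 2n×2n matrix (indexed by B × {1,2}, independent of u) with operator norm ‖Ξ‖ ≤ γ. Let M(u) = H_B(u) + Ξ, where H_B(u) is the real symmetric matrix indexed by B × {1,2} whose 2×2 diagonal block at x ∈ B is h_x = [[u_x, 1],[1, −u_x]] and whose 2×2 block between distinct x, y ∈ B is γ·I₂ if |x−y| = 1 and 0 otherwise, with (u_x)_{x∈B} i.i.d. uniform on [−1,1]. Let λ₁(u), …, λ_{2n}(u) denote the eigenvalues of M(u) counted with multiplicity. Then for every δ ∈ (0,1], the probability that min_{i<j} |λ_i(u) − λ_j(u)| < δ is at most δ^{1/(2n²)}·4·(4n)^{n+1}. -/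

import Mathlib

open Matrix MeasureTheory

/-- The uniform probability measure on `[-1,1]`. -/
noncomputable def unif : Measure ℝ :=
  ((2 : NNReal))⁻¹ • (volume.restrict (Set.Icc (-1 : ℝ) 1))

instance : IsProbabilityMeasure unif := by
  constructor
  rw [unif, Measure.smul_apply, Measure.restrict_apply_univ, Real.volume_Icc]
  norm_num
  rw [ENNReal.smul_def]
  simp [ENNReal.inv_mul_cancel]

/-- The product of uniform measures on `[-1,1]^ι` (i.i.d. uniform random variables). -/
noncomputable def unifPi (ι : Type*) [Fintype ι] : Measure (ι → ℝ) :=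
  Measure.pi fun _ => unif

/-- The ℓ¹ distance `|x-y| = Σᵢ |xᵢ-yᵢ|` on `ℤ^d`, as a natural number. -/
def dist1 {d : ℕ} (x y : Fin d → ℤ) : ℕ := ∑ i, (x i - y i).natAbs

/-- The random block Hamiltonian: diagonal 2×2 block `[[u_x,1],[1,-u_x]]` at each
position `x ∈ B`, and block `γ·I₂` between nearest-neighbor positions. -/
noncomputable def Ham (d : ℕ) (γ : ℝ) (Λ : Finset (Fin d → ℤ)) (u : {x // x ∈ Λ} → ℝ) :
    Matrix ({x // x ∈ Λ} × Fin 2) ({x // x ∈ Λ} × Fin 2) ℝ := fun s t =>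
  if s.1 = t.1 then
    (if s.2 = t.2 then (if s.2 = 0 then u s.1 else -u s.1) else 1)
  else if dist1 (s.1 : Fin d → ℤ) (t.1 : Fin d → ℤ) = 1 then
    (if s.2 = t.2 then γ else 0)
  else 0

/-- The operator norm of a real matrix acting between Euclidean spaces. -/
noncomputable def opNorm {m n : Type*} [Fintype m] [Fintype n] [DecidableEq n]
    (M : Matrix m n ℝ) : ℝ :=
  ‖LinearMap.toContinuousLinearMap (Matrix.toEuclideanLin M)‖

/-!
The discriminant of `M(u)` is a polynomial in `u` of degree at most `2n(2n - 1)`. At the reference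
point `c` whose entries are `0, 2, …, 2(n - 1)`, the uncoupled levels `±√(1 + c x ^ 2)` are at least
`6/5` apart, and coupling of norm at most `1/20` moves each gap by at most `1/10`, so the
discriminant is at least `1` there. Conversely, for `u` in the cube the spectrum has diameter at
most `3`, so two eigenvalues within `δ` force the discriminant below `δ² 3 ^ (2n(2n - 1))`.

A polynomial `q` of degree `D` is rarely small compared to `q(0)`: if `α D < 1`, AM-GM over its
roots bounds the integral of `|q(0) / q(t)| ^ α` over `[1/2, 1]`. Applying this along every line
through `c` and averaging over the homotheties with center `c` and ratio `t` bounds the probability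
that the discriminant is small. The exponent is `α = 1 / (4n²)`, for which `1 - α D = 1 / (2n)` when
`D = 2n(2n - 1)`.
-/

section Cartan

open Polynomial

theorem lintegral_Icc_abs_rpow_neg {s : ℝ} (hs : s < 1) :
    ∫⁻ y in Set.Icc (-1 : ℝ) 1, ENNReal.ofReal (|y| ^ (-s)) = ENNReal.ofReal (2 / (1 - s)) := by
  have h_eqOn : Set.EqOn (fun y : ℝ ↦ y ^ (-s)) (fun y ↦ |y| ^ (-s)) (Set.uIcc 0 1) := fun y hy ↦ by
    rw [Set.uIcc_of_le zero_le_one] at hy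
    simp only [abs_of_nonneg hy.1]
  have h_right : IntervalIntegrable (fun y : ℝ ↦ |y| ^ (-s)) volume 0 1 :=
    (intervalIntegral.intervalIntegrable_rpow' (by linarith)).congr
      (h_eqOn.mono Set.uIoc_subset_uIcc)
  have h_left : IntervalIntegrable (fun y : ℝ ↦ |y| ^ (-s)) volume (-1) 0 := by
    simpa only [abs_neg, neg_zero] using ((IntervalIntegrable.iff_comp_neg).mp h_right).symm
  have h_integral_right : ∫ y in (0 : ℝ)..1, |y| ^ (-s) = 1 / (1 - s) := by
    rw [← intervalIntegral.integral_congr h_eqOn, integral_rpow (.inl (by linarith)),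
      Real.one_rpow, Real.zero_rpow (by linarith), sub_zero, neg_add_eq_sub]
  have h_integral_left : ∫ y in (-1 : ℝ)..0, |y| ^ (-s) = 1 / (1 - s) := by
    simpa only [abs_neg, neg_zero, h_integral_right] using
      (intervalIntegral.integral_comp_neg (a := 0) (b := 1) fun y : ℝ ↦ |y| ^ (-s)).symm
  rw [← restrict_Ioc_eq_restrict_Icc, ← ofReal_integral_eq_lintegral_ofReal
      ((intervalIntegrable_iff_integrableOn_Ioc_of_le (by norm_num)).mp (h_left.trans h_right))
      (.of_forall fun y ↦ by positivity),
    ← intervalIntegral.integral_of_le (by norm_num),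
    ← intervalIntegral.integral_add_adjacent_intervals h_left h_right, h_integral_left,
    h_integral_right, ← add_div, one_add_one_eq_two]

theorem lintegral_norm_ofReal_sub_rpow_neg_le {s : ℝ} (hs₀ : 0 ≤ s) (hs : s < 1) (z : ℂ)
    (A : Set ℝ) :
    ∫⁻ t in A, ENNReal.ofReal (‖(t : ℂ) - z‖ ^ (-s)) ≤
      volume A + ENNReal.ofReal (2 / (1 - s)) := by
  let f : ℝ → ENNReal := (Set.Icc (-1) 1).indicator fun y ↦ ENNReal.ofReal (|y| ^ (-s))
  have h_le : ∀ t : ℝ, t ≠ z.re → ENNReal.ofReal (‖(t : ℂ) - z‖ ^ (-s)) ≤ 1 + f (t - z.re) := by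
    intro t ht
    have h_abs : |t - z.re| ≤ ‖(t : ℂ) - z‖ := by simpa using Complex.abs_re_le_norm ((t : ℂ) - z)
    have h_pos : 0 < |t - z.re| := abs_pos.mpr (sub_ne_zero.mpr ht)
    by_cases h_mem : t - z.re ∈ Set.Icc (-1) 1
    · simp only [f, Set.indicator_of_mem h_mem]
      exact le_add_left (ENNReal.ofReal_le_ofReal
        (Real.rpow_le_rpow_of_nonpos h_pos h_abs (neg_nonpos.mpr hs₀)))
    · have h_one : 1 ≤ |t - z.re| := (not_le.mp fun h ↦ h_mem (abs_le.mp h)).le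
      refine le_add_right (ENNReal.ofReal_le_one.mpr ?_)
      exact Real.rpow_le_one_of_one_le_of_nonpos (h_one.trans h_abs) (neg_nonpos.mpr hs₀)
  calc ∫⁻ t in A, ENNReal.ofReal (‖(t : ℂ) - z‖ ^ (-s))
      ≤ ∫⁻ t in A, (1 + f (t - z.re)) := by
        refine lintegral_mono_ae (ae_restrict_of_ae ?_)
        filter_upwards [Measure.ae_ne volume z.re] with t ht using h_le t ht
    _ ≤ volume A + ∫⁻ t, f (t - z.re) := by
        rw [lintegral_add_left measurable_const, setLIntegral_one]
        gcongr
        exact Measure.restrict_le_self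
    _ = volume A + ENNReal.ofReal (2 / (1 - s)) := by
        rw [lintegral_sub_right_eq_self f, lintegral_indicator measurableSet_Icc,
          lintegral_Icc_abs_rpow_neg hs]

theorem norm_eval_zero_div_norm_eval_le {p : ℂ[X]} {t : ℂ} (ht : ‖t‖ ≤ 1) (hpt : p.eval t ≠ 0) :
    ‖p.eval 0‖ / ‖p.eval t‖ ≤ ∏ a ∈ p.roots.toFinset, (1 + ‖t - a‖⁻¹) ^ p.roots.count a := by
  have h_norm (w : ℂ) : ‖p.eval w‖ =
      ‖p.leadingCoeff‖ * ∏ a ∈ p.roots.toFinset, ‖w - a‖ ^ p.roots.count a := by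
    rw [(IsAlgClosed.splits p).eval_eq_prod_roots, Finset.prod_multiset_map_count]
    simp [norm_prod]
  have h_root : ∀ a ∈ p.roots.toFinset, 0 < ‖t - a‖ := by
    intro a ha
    refine norm_pos_iff.mpr (sub_ne_zero.mpr ?_)
    rintro rfl
    exact hpt (isRoot_of_mem_roots (Multiset.mem_toFinset.mp ha))
  have h_lead : ‖p.leadingCoeff‖ ≠ 0 := by
    rw [norm_ne_zero_iff, leadingCoeff_ne_zero]
    rintro rfl
    exact hpt eval_zero
  rw [h_norm, h_norm, mul_div_mul_left _ _ h_lead, ← Finset.prod_div_distrib]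
  refine Finset.prod_le_prod (fun a _ ↦ by positivity) fun a ha ↦ ?_
  rw [← div_pow]
  gcongr
  rw [div_le_iff₀ (h_root a ha), add_mul, inv_mul_cancel₀ (h_root a ha).ne', one_mul]
  calc ‖0 - a‖ ≤ ‖t - a‖ + ‖t‖ := by simpa using norm_sub_le (t - a) t
    _ ≤ ‖t - a‖ + 1 := by gcongr

theorem rpow_norm_eval_zero_div_norm_eval_le {p : ℂ[X]} {t : ℂ} (ht : ‖t‖ ≤ 1)
    (hpt : p.eval t ≠ 0) {α : ℝ} (hα : 0 ≤ α) (hαp : α * p.natDegree ≤ 1) :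
    (‖p.eval 0‖ / ‖p.eval t‖) ^ α ≤
      1 + ∑ a ∈ p.roots.toFinset,
        (p.roots.count a / p.natDegree : ℝ) * ‖t - a‖ ^ (-(α * p.natDegree)) := by
  have h_card : ∑ a ∈ p.roots.toFinset, (p.roots.count a : ℝ) = p.natDegree := by
    rw [← Nat.cast_sum, p.roots.toFinset_sum_count_eq,
      (IsAlgClosed.splits p).natDegree_eq_card_roots]
  have h_base := norm_eval_zero_div_norm_eval_le ht hpt
  rcases p.natDegree.eq_zero_or_pos with h_deg | h_deg
  · have h_roots : p.roots = 0 :=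
      Multiset.card_eq_zero.mp (by rw [← (IsAlgClosed.splits p).natDegree_eq_card_roots, h_deg])
    simp only [h_roots, Multiset.toFinset_zero, Finset.prod_empty, Finset.sum_empty,
      add_zero] at h_base ⊢
    exact Real.rpow_le_one (by positivity) h_base hα
  calc (‖p.eval 0‖ / ‖p.eval t‖) ^ α
      ≤ (∏ a ∈ p.roots.toFinset, (1 + ‖t - a‖⁻¹) ^ p.roots.count a) ^ α := by gcongr
    _ = ∏ a ∈ p.roots.toFinset,
          ((1 + ‖t - a‖⁻¹) ^ (α * p.natDegree)) ^ (p.roots.count a / p.natDegree : ℝ) := by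
        rw [← Real.finsetProd_rpow _ _ fun a _ ↦ by positivity]
        refine Finset.prod_congr rfl fun a _ ↦ ?_
        rw [← Real.rpow_natCast, ← Real.rpow_mul (by positivity), ← Real.rpow_mul (by positivity)]
        congr 1
        field_simp
    _ ≤ ∑ a ∈ p.roots.toFinset,
          (p.roots.count a / p.natDegree : ℝ) * (1 + ‖t - a‖⁻¹) ^ (α * p.natDegree) :=
        Real.geom_mean_le_arith_mean_weighted _ _ _ (fun a _ ↦ by positivity)
          (by rw [← Finset.sum_div, h_card, div_self (by positivity)]) fun a _ ↦ by positivity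
    _ ≤ ∑ a ∈ p.roots.toFinset,
          (p.roots.count a / p.natDegree : ℝ) * (1 + ‖t - a‖ ^ (-(α * p.natDegree))) := by
        gcongr with a
        rw [Real.rpow_neg (norm_nonneg _), ← Real.inv_rpow (norm_nonneg _)]
        simpa only [Real.one_rpow] using Real.rpow_add_le_add_rpow zero_le_one
          (inv_nonneg.mpr (norm_nonneg _)) (by positivity) hαp
    _ = _ := by
        simp only [mul_one_add, Finset.sum_add_distrib, ← Finset.sum_div, h_card]
        rw [div_self (by positivity)]

theorem ae_eval_ofReal_ne_zero {p : ℂ[X]} (hp : p ≠ 0) : ∀ᵐ t : ℝ, p.eval (t : ℂ) ≠ 0 := by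
  have h_finite : {t : ℝ | p.eval (t : ℂ) = 0}.Finite :=
    ((p.rootSet_finite ℂ).preimage Complex.ofReal_injective.injOn).subset fun t ht ↦ by
      simpa [mem_rootSet, hp] using ht
  exact h_finite.countable.ae_notMem volume

theorem lintegral_rpow_norm_eval_zero_div_norm_eval_le {p : ℂ[X]} (hp : p ≠ 0) {A : Set ℝ}
    (hA : A ⊆ Set.Icc (-1) 1) (hA_meas : MeasurableSet A) {α : ℝ} (hα : 0 ≤ α)
    (hαp : α * p.natDegree < 1) :
    ∫⁻ t in A, ENNReal.ofReal ((‖p.eval 0‖ / ‖p.eval (t : ℂ)‖) ^ α) ≤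
      2 * volume A + ENNReal.ofReal (2 / (1 - α * p.natDegree)) := by
  set K := volume A + ENNReal.ofReal (2 / (1 - α * p.natDegree)) with hK
  let w (a : ℂ) : ℝ := p.roots.count a / p.natDegree
  have h_weight : ∑ a ∈ p.roots.toFinset, w a ≤ 1 := by
    simp only [w]
    rw [← Finset.sum_div, ← Nat.cast_sum, p.roots.toFinset_sum_count_eq,
      ← (IsAlgClosed.splits p).natDegree_eq_card_roots]
    exact div_self_le_one _
  calc ∫⁻ t in A, ENNReal.ofReal ((‖p.eval 0‖ / ‖p.eval (t : ℂ)‖) ^ α)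
      ≤ ∫⁻ t in A, (1 + ∑ a ∈ p.roots.toFinset, ENNReal.ofReal (w a) *
          ENNReal.ofReal (‖(t : ℂ) - a‖ ^ (-(α * p.natDegree)))) := by
        refine lintegral_mono_ae ?_
        filter_upwards [ae_restrict_of_ae (ae_eval_ofReal_ne_zero hp), ae_restrict_mem hA_meas]
          with t h_ne ht
        have h_norm : ‖(t : ℂ)‖ ≤ 1 := by simpa using abs_le.mpr (hA ht)
        refine (ENNReal.ofReal_le_ofReal
          (rpow_norm_eval_zero_div_norm_eval_le h_norm h_ne hα hαp.le)).trans_eq ?_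
        rw [ENNReal.ofReal_add zero_le_one (by positivity), ENNReal.ofReal_one,
          ENNReal.ofReal_sum_of_nonneg fun a _ ↦ by positivity]
        simp only [ENNReal.ofReal_mul (show 0 ≤ w _ by positivity), w]
    _ = volume A + ∑ a ∈ p.roots.toFinset, ENNReal.ofReal (w a) *
          ∫⁻ t in A, ENNReal.ofReal (‖(t : ℂ) - a‖ ^ (-(α * p.natDegree))) := by
        rw [lintegral_add_left measurable_const, setLIntegral_one,
          lintegral_finsetSum _ fun a _ ↦ by fun_prop]
        simp_rw [lintegral_const_mul' _ _ ENNReal.ofReal_ne_top]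
    _ ≤ volume A + ∑ a ∈ p.roots.toFinset, ENNReal.ofReal (w a) * K := by
        gcongr with a
        exact lintegral_norm_ofReal_sub_rpow_neg_le (by positivity) hαp a A
    _ ≤ volume A + 1 * K := by
        rw [← Finset.sum_mul, ← ENNReal.ofReal_sum_of_nonneg fun a _ ↦ by positivity]
        gcongr
        exact ENNReal.ofReal_le_one.mpr h_weight
    _ = _ := by rw [one_mul, hK, ← add_assoc, two_mul]

theorem volume_norm_eval_le_mul_norm_eval_zero {p : ℂ[X]} (hp : p.eval 0 ≠ 0) {A : Set ℝ}
    (hA : A ⊆ Set.Icc (-1) 1) (hA_meas : MeasurableSet A) {α : ℝ} (hα : 0 ≤ α)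
    (hαp : α * p.natDegree < 1) {ε : ℝ} (hε : 0 < ε) :
    volume {t ∈ A | ‖p.eval (t : ℂ)‖ ≤ ε * ‖p.eval 0‖} ≤
      ENNReal.ofReal (ε ^ α) * (2 * volume A + ENNReal.ofReal (2 / (1 - α * p.natDegree))) := by
  have hp₀ : p ≠ 0 := by rintro rfl; exact hp eval_zero
  let ratio (t : ℝ) : ENNReal := ENNReal.ofReal ((‖p.eval 0‖ / ‖p.eval (t : ℂ)‖) ^ α)
  have h_ratio : ∀ t : ℝ, p.eval (t : ℂ) ≠ 0 → ‖p.eval (t : ℂ)‖ ≤ ε * ‖p.eval 0‖ →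
      ENNReal.ofReal ((ε ^ α)⁻¹) ≤ ratio t := by
    intro t h_ne ht
    refine ENNReal.ofReal_le_ofReal ?_
    rw [← Real.inv_rpow hε.le]
    gcongr
    rwa [inv_le_iff_one_le_mul₀' hε, ← mul_div_assoc, one_le_div₀ (norm_pos_iff.mpr h_ne)]
  have h_pow : ENNReal.ofReal (ε ^ α) * ENNReal.ofReal ((ε ^ α)⁻¹) = 1 := by
    rw [← ENNReal.ofReal_mul (by positivity), mul_inv_cancel₀ (by positivity), ENNReal.ofReal_one]
  calc volume {t ∈ A | ‖p.eval (t : ℂ)‖ ≤ ε * ‖p.eval 0‖}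
      = volume.restrict A {t | ‖p.eval (t : ℂ)‖ ≤ ε * ‖p.eval 0‖} := by
        rw [Measure.restrict_apply' hA_meas, Set.inter_comm]
        rfl
    _ ≤ volume.restrict A {t | ENNReal.ofReal ((ε ^ α)⁻¹) ≤ ratio t} :=
        measure_mono_ae (ae_restrict_of_ae
          ((ae_eval_ofReal_ne_zero hp₀).mono h_ratio))
    _ = ENNReal.ofReal (ε ^ α) * (ENNReal.ofReal ((ε ^ α)⁻¹) *
          volume.restrict A {t | ENNReal.ofReal ((ε ^ α)⁻¹) ≤ ratio t}) := by
        rw [← mul_assoc, h_pow, one_mul]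
    _ ≤ ENNReal.ofReal (ε ^ α) * ∫⁻ t in A, ratio t := by
        gcongr
        exact mul_meas_ge_le_lintegral (by fun_prop) _
    _ ≤ _ := by
        gcongr
        exact lintegral_rpow_norm_eval_zero_div_norm_eval_le hp₀ hA hA_meas hα hαp

theorem volume_abs_eval_le_mul_abs_eval_zero {p : ℝ[X]} (hp : p.eval 0 ≠ 0) {A : Set ℝ}
    (hA : A ⊆ Set.Icc (-1) 1) (hA_meas : MeasurableSet A) {α : ℝ} (hα : 0 ≤ α)
    (hαp : α * p.natDegree < 1) {ε : ℝ} (hε : 0 < ε) :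
    volume {t ∈ A | |p.eval t| ≤ ε * |p.eval 0|} ≤
      ENNReal.ofReal (ε ^ α) * (2 * volume A + ENNReal.ofReal (2 / (1 - α * p.natDegree))) := by
  have h_norm (t : ℝ) : ‖(p.map Complex.ofRealHom).eval (t : ℂ)‖ = |p.eval t| := by
    rw [← Complex.ofRealHom_eq_coe, eval_map_apply, Complex.ofRealHom_eq_coe, Complex.norm_real,
      Real.norm_eq_abs]
  have h_zero := h_norm 0
  rw [Complex.ofReal_zero] at h_zero
  have h_complex := volume_norm_eval_le_mul_norm_eval_zero (p := p.map Complex.ofRealHom)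
    (norm_ne_zero_iff.mp (h_zero ▸ abs_ne_zero.mpr hp)) hA hA_meas hα
    (by rwa [natDegree_map]) hε
  simpa only [h_norm, h_zero, natDegree_map] using h_complex

end Cartan

section Homothety

variable {F : Type*} [NormedAddCommGroup F] [NormedSpace ℝ F] [MeasurableSpace F] [BorelSpace F]
  [FiniteDimensional ℝ F] (μ : Measure F) [μ.IsAddHaarMeasure]

theorem measure_le_measure_preimage_homothety (c : F) {t : ℝ} (ht : t ∈ Set.Ioc 0 1) (E : Set F) :
    μ E ≤ μ (AffineMap.homothety c t ⁻¹' E) := by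
  have h_surj : Function.Surjective (AffineMap.homothety c t) := fun v ↦
    ⟨AffineMap.homothety c t⁻¹ v, by
      rw [← AffineMap.homothety_mul_apply, mul_inv_cancel₀ ht.1.ne', AffineMap.homothety_one,
        AffineMap.id_apply]⟩
  calc μ E = ENNReal.ofReal |t ^ Module.finrank ℝ F| * μ (AffineMap.homothety c t ⁻¹' E) := by
        rw [← Measure.addHaar_image_homothety, Set.image_preimage_eq _ h_surj]
    _ ≤ 1 * μ (AffineMap.homothety c t ⁻¹' E) := by
        gcongr
        rw [ENNReal.ofReal_le_one, abs_of_nonneg (pow_nonneg ht.1.le _)]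
        exact pow_le_one₀ ht.1.le ht.2
    _ = _ := one_mul _

theorem volume_mul_measure_le_of_homothety (c : F) {T : Set ℝ} (hT : T ⊆ Set.Ioc 0 1)
    (hT_meas : MeasurableSet T) {E V : Set F} (hE : MeasurableSet E) (hV : MeasurableSet V)
    (hEV : ∀ t ∈ T, AffineMap.homothety c t ⁻¹' E ⊆ V) {b : ENNReal}
    (hb : ∀ v, volume {t ∈ T | AffineMap.homothety c t v ∈ E} ≤ b) :
    volume T * μ E ≤ b * μ V := by
  let S : Set (ℝ × F) := {q | q.1 ∈ T ∧ AffineMap.homothety c q.1 q.2 ∈ E}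
  have hS : MeasurableSet S := by
    refine (measurable_fst hT_meas).inter ?_
    simp only [AffineMap.homothety_apply, vsub_eq_sub, vadd_eq_add]
    exact (by fun_prop : Measurable fun q : ℝ × F ↦ q.1 • (q.2 - c) + c) hE
  calc volume T * μ E = ∫⁻ _ in T, μ E := by rw [setLIntegral_const, mul_comm]
    _ ≤ ∫⁻ t in T, μ (Prod.mk t ⁻¹' S) := by
        refine setLIntegral_mono' hT_meas fun t ht ↦ ?_
        refine (measure_le_measure_preimage_homothety μ c (hT ht) E).trans (measure_mono ?_)
        exact fun v hv ↦ ⟨ht, hv⟩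
    _ ≤ (volume.prod μ) S := by
        rw [Measure.prod_apply hS]
        exact setLIntegral_le_lintegral _ _
    _ = ∫⁻ v, volume {t ∈ T | AffineMap.homothety c t v ∈ E} ∂μ := Measure.prod_apply_symm hS
    _ ≤ ∫⁻ v, V.indicator (fun _ ↦ b) v ∂μ := by
        refine lintegral_mono fun v ↦ ?_
        by_cases hv : v ∈ V
        · simpa only [Set.indicator_of_mem hv] using hb v
        · have h_empty : {t ∈ T | AffineMap.homothety c t v ∈ E} = ∅ :=
            Set.eq_empty_of_forall_notMem fun t ht ↦ hv (hEV t ht.1 ht.2)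
          simp only [h_empty, measure_empty, zero_le]
    _ = b * μ V := lintegral_indicator_const hV b

end Homothety

section MvPolynomial

open MvPolynomial

variable {ι : Type*}

theorem volume_abs_eval_homothety_le {F : MvPolynomial ι ℝ} {c : ι → ℝ} (hF : eval c F ≠ 0)
    {A : Set ℝ} (hA : A ⊆ Set.Icc (-1) 1) (hA_meas : MeasurableSet A) {α : ℝ} (hα : 0 ≤ α)
    {D : ℕ} (hFD : F.totalDegree ≤ D) (hαF : α * D < 1) {ε : ℝ} (hε : 0 < ε) (v : ι → ℝ) :
    volume {t ∈ A | |eval (AffineMap.homothety c t v) F| ≤ ε * |eval c F|} ≤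
      ENNReal.ofReal (ε ^ α) * (2 * volume A + ENNReal.ofReal (2 / (1 - α * D))) := by
  let p : Polynomial ℝ :=
    aeval (fun i ↦ Polynomial.C (v i - c i) * Polynomial.X + Polynomial.C (c i)) F
  have h_eval (t : ℝ) : p.eval t = eval (AffineMap.homothety c t v) F := by
    simp only [p, ← Polynomial.coe_aeval_eq_eval, ← aeval_eq_eval, comp_aeval_apply]
    congr 2
    ext i
    simp [AffineMap.homothety_apply, mul_comm]
  have h_eval_zero : p.eval 0 = eval c F := by
    rw [h_eval, AffineMap.homothety_zero, AffineMap.const_apply]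
  have h_deg : p.natDegree ≤ D := by
    simpa using aeval_natDegree_le F hFD _ fun i ↦ Polynomial.natDegree_linear_le
  have h_mul : α * p.natDegree ≤ α * D := by gcongr
  have h_poly := volume_abs_eval_le_mul_abs_eval_zero (h_eval_zero ▸ hF) hA hA_meas hα
    (h_mul.trans_lt hαF) hε
  simp only [h_eval_zero, h_eval] at h_poly
  refine h_poly.trans ?_
  gcongr

variable [Fintype ι]

theorem volume_inter_abs_eval_le {F : MvPolynomial ι ℝ} {c : ι → ℝ} (hF : eval c F ≠ 0) {α : ℝ}
    (hα : 0 ≤ α) {D : ℕ} (hFD : F.totalDegree ≤ D) (hαD : α * D < 1) {ε : ℝ} (hε : 0 < ε)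
    {Q V : Set (ι → ℝ)} (hQ : MeasurableSet Q) (hV : MeasurableSet V)
    (hQV : ∀ t ∈ Set.Icc (1 / 2 : ℝ) 1, AffineMap.homothety c t ⁻¹' Q ⊆ V) :
    volume (Q ∩ {u | |eval u F| ≤ ε * |eval c F|}) ≤
      ENNReal.ofReal (2 * (ε ^ α * (1 + 2 / (1 - α * D)))) * volume V := by
  have h_vol : volume (Set.Icc (1 / 2 : ℝ) 1) = 2⁻¹ := by
    rw [Real.volume_Icc, sub_half, one_div, ENNReal.ofReal_inv_of_pos two_pos, ENNReal.ofReal_ofNat]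
  have h_bad : MeasurableSet {u | |eval u F| ≤ ε * |eval c F|} :=
    measurableSet_le (continuous_eval F).abs.measurable measurable_const
  have h_avg : 2⁻¹ * volume (Q ∩ {u | |eval u F| ≤ ε * |eval c F|}) ≤
      ENNReal.ofReal (ε ^ α) * (1 + ENNReal.ofReal (2 / (1 - α * D))) * volume V := by
    rw [← h_vol]
    refine volume_mul_measure_le_of_homothety volume c (fun t ht ↦ ⟨by linarith [ht.1], ht.2⟩)
      measurableSet_Icc (hQ.inter h_bad) hV (fun t ht v hv ↦ hQV t ht hv.1) fun v ↦ ?_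
    have h_line := volume_abs_eval_homothety_le hF
      (Set.Icc_subset_Icc_left (by norm_num : (-1 : ℝ) ≤ 1 / 2)) measurableSet_Icc hα hFD hαD hε v
    rw [h_vol, ENNReal.mul_inv_cancel two_ne_zero ENNReal.ofNat_ne_top] at h_line
    refine le_trans (measure_mono ?_) h_line
    exact fun t ht ↦ ⟨ht.1, ht.2.2⟩
  calc volume (Q ∩ {u | |eval u F| ≤ ε * |eval c F|})
      = 2 * (2⁻¹ * volume (Q ∩ {u | |eval u F| ≤ ε * |eval c F|})) := by
        rw [← mul_assoc, ENNReal.mul_inv_cancel two_ne_zero ENNReal.ofNat_ne_top, one_mul]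
    _ ≤ 2 * (ENNReal.ofReal (ε ^ α) * (1 + ENNReal.ofReal (2 / (1 - α * D))) * volume V) := by
        gcongr
    _ = _ := by
        rw [ENNReal.ofReal_mul two_pos.le, ENNReal.ofReal_mul (by positivity),
          ENNReal.ofReal_add one_pos.le (div_nonneg two_pos.le (by linarith)), ENNReal.ofReal_one,
          ENNReal.ofReal_ofNat, ← mul_assoc]

theorem unifPi_eq_smul_restrict :
    unifPi ι = (2⁻¹ : ENNReal) ^ Fintype.card ι •
      volume.restrict (Set.univ.pi fun _ ↦ Set.Icc (-1) 1) := by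
  have h_unif (s : Set ℝ) : unif s = 2⁻¹ * volume.restrict (Set.Icc (-1) 1) s := by
    rw [unif, Measure.smul_apply, ENNReal.smul_def, smul_eq_mul, ENNReal.coe_inv two_ne_zero]
    rfl
  refine Measure.pi_eq fun s _ ↦ ?_
  rw [volume_pi, Measure.restrict_pi_pi, Measure.smul_apply, Measure.pi_pi]
  simp only [h_unif, Finset.prod_mul_distrib, Finset.prod_const, Finset.card_univ, smul_eq_mul]

theorem ae_unifPi_mem_Icc : ∀ᵐ u ∂unifPi ι, ∀ x, u x ∈ Set.Icc (-1) 1 := by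
  have h_cube : MeasurableSet (Set.univ.pi fun _ : ι ↦ Set.Icc (-1 : ℝ) 1) :=
    .univ_pi fun _ ↦ measurableSet_Icc
  rw [unifPi_eq_smul_restrict]
  filter_upwards [Measure.ae_smul_measure (ae_restrict_mem h_cube) _] with u hu x
  exact hu x (Set.mem_univ x)

theorem unifPi_abs_eval_le {F : MvPolynomial ι ℝ} {c : ι → ℝ} (hF : eval c F ≠ 0) {r : ℝ}
    (hr : 0 ≤ r) (hc : ∀ i, c i ∈ Set.Icc 0 r) {α : ℝ} (hα : 0 ≤ α) {D : ℕ}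
    (hFD : F.totalDegree ≤ D) (hαD : α * D < 1) {ε : ℝ} (hε : 0 < ε) :
    unifPi ι {u | |eval u F| ≤ ε * |eval c F|} ≤
      ENNReal.ofReal (2 * (ε ^ α * (1 + 2 / (1 - α * D))) * (2 + r) ^ Fintype.card ι) := by
  let box : Set (ι → ℝ) := Set.univ.pi fun i ↦ Set.Icc (c i - 2 * (1 + r)) (c i + 2)
  have h_preimage : ∀ t ∈ Set.Icc (1 / 2 : ℝ) 1,
      AffineMap.homothety c t ⁻¹' (Set.univ.pi fun _ ↦ Set.Icc (-1) 1) ⊆ box := by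
    rintro t ⟨ht, ht'⟩ v hv i -
    have h_i := hv i (Set.mem_univ i)
    simp only [AffineMap.homothety_apply, vsub_eq_sub, vadd_eq_add, Pi.add_apply, Pi.smul_apply,
      Pi.sub_apply, smul_eq_mul, Set.mem_Icc] at h_i
    obtain ⟨hc₀, hcr⟩ := hc i
    constructor <;> nlinarith [ht, ht']
  have h_box : volume box = ENNReal.ofReal (2 * (2 + r)) ^ Fintype.card ι := by
    have h_length (i : ι) : c i + 2 - (c i - 2 * (1 + r)) = 2 * (2 + r) := by ring
    simp only [box, volume_pi_pi, Real.volume_Icc, h_length, Finset.prod_const, Finset.card_univ]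
  have h_cube : MeasurableSet (Set.univ.pi fun _ : ι ↦ Set.Icc (-1 : ℝ) 1) :=
    .univ_pi fun _ ↦ measurableSet_Icc
  rw [unifPi_eq_smul_restrict, Measure.smul_apply, Measure.restrict_apply' h_cube, smul_eq_mul,
    Set.inter_comm]
  calc _ ≤ 2⁻¹ ^ Fintype.card ι *
        (ENNReal.ofReal (2 * (ε ^ α * (1 + 2 / (1 - α * D)))) * volume box) := by
        gcongr
        exact volume_inter_abs_eval_le hF hα hFD hαD hε h_cube
          (.univ_pi fun _ ↦ measurableSet_Icc) h_preimage
    _ = _ := by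
        have h_factor : 0 ≤ 2 * (ε ^ α * (1 + 2 / (1 - α * D))) :=
          mul_nonneg zero_le_two (mul_nonneg (by positivity)
            (add_nonneg zero_le_one (div_nonneg zero_le_two (by linarith))))
        have h_half : 2⁻¹ * ENNReal.ofReal (2 * (2 + r)) = ENNReal.ofReal (2 + r) := by
          rw [ENNReal.ofReal_mul two_pos.le, ← mul_assoc, ENNReal.ofReal_ofNat,
            ENNReal.inv_mul_cancel two_ne_zero ENNReal.ofNat_ne_top, one_mul]
        rw [h_box, mul_left_comm, ← mul_pow, h_half, ← ENNReal.ofReal_pow (by positivity),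
          ← ENNReal.ofReal_mul h_factor]

end MvPolynomial

section Discriminant

/-- The determinant of the Hankel matrix of the power traces of `A`. Over a splitting field it is
the discriminant `∏ (λ i - λ j) ^ 2`, over pairs `i < j`, of the eigenvalues of `A`; being written
in terms of traces, it is a polynomial in the entries of `A`. -/
def powerTraceDisc {R S : Type*} [CommRing R] [Fintype S] [DecidableEq S] (A : Matrix S S R) : R :=
  det (of fun k l : Fin (Fintype.card S) ↦ trace (A ^ (k + l : ℕ)))

variable {S : Type*} [Fintype S] [DecidableEq S]

theorem map_powerTraceDisc {R R' : Type*} [CommRing R] [CommRing R'] (φ : R →+* R')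
    (A : Matrix S S R) : φ (powerTraceDisc A) = powerTraceDisc (A.map φ) := by
  rw [powerTraceDisc, powerTraceDisc, RingHom.map_det]
  congr 1
  ext k l
  simp only [RingHom.mapMatrix_apply, map_apply, of_apply, AddMonoidHom.map_trace, Matrix.map_pow]

theorem trace_pow_eq_sum_eigenvalues_pow {A : Matrix S S ℝ} (hA : A.IsHermitian) (k : ℕ) :
    trace (A ^ k) = ∑ i, hA.eigenvalues i ^ k := by
  conv_lhs =>
    rw [hA.spectral_theorem, ← map_pow, Unitary.conjStarAlgAut_apply, trace_mul_cycle]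
  simp [diagonal_pow, trace_diagonal]

theorem powerTraceDisc_eq_prod_offDiag {A : Matrix S S ℝ} (hA : A.IsHermitian) :
    powerTraceDisc A =
      ∏ p ∈ Finset.univ.offDiag, |hA.eigenvalues p.1 - hA.eigenvalues p.2| := by
  let e : Fin (Fintype.card S) ≃ S := (Fintype.equivFin S).symm
  let v : Fin (Fintype.card S) → ℝ := fun i ↦ hA.eigenvalues (e i)
  have h_gram : (of fun k l : Fin (Fintype.card S) ↦ trace (A ^ (k + l : ℕ))) =
      (vandermonde v)ᵀ * vandermonde v := by
    ext k l
    rw [of_apply, trace_pow_eq_sum_eigenvalues_pow hA, ← e.sum_comp]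
    simp only [mul_apply, transpose_apply, vandermonde_apply, pow_add, v]
  calc powerTraceDisc A = ∏ i, ∏ j ∈ Finset.Ioi i, |v i - v j| * |v j - v i| := by
        rw [powerTraceDisc, h_gram, det_mul, det_transpose, det_vandermonde,
          ← Finset.prod_mul_distrib]
        refine Finset.prod_congr rfl fun i _ ↦ ?_
        rw [← Finset.prod_mul_distrib]
        refine Finset.prod_congr rfl fun j _ ↦ ?_
        rw [abs_sub_comm (v i), abs_mul_abs_self]
    _ = ∏ i, ∏ j ∈ {i}ᶜ, |v i - v j| :=
        Finset.prod_prod_Ioi_mul_eq_prod_prod_off_diag fun j i ↦ |v i - v j|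
    _ = ∏ i, ∏ j ∈ {i}ᶜ, |hA.eigenvalues i - hA.eigenvalues j| :=
        Fintype.prod_equiv e _ _ fun i ↦ Finset.prod_equiv e (by simp) (by simp [v])
    _ = _ := (Finset.prod_finset_product' _ _ _ (by simp [eq_comm])).symm

theorem one_le_powerTraceDisc {A : Matrix S S ℝ} (hA : A.IsHermitian)
    (h_gap : Pairwise fun i j ↦ 1 ≤ |hA.eigenvalues i - hA.eigenvalues j|) :
    1 ≤ powerTraceDisc A := by
  rw [powerTraceDisc_eq_prod_offDiag hA]
  exact Finset.one_le_prod fun p hp ↦ h_gap (Finset.mem_offDiag.mp hp).2.2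

theorem prod_le_mul_mul_pow_card {κ : Type*} {s : Finset κ} {f : κ → ℝ} {R : ℝ}
    (hf : ∀ x ∈ s, f x ∈ Set.Icc 0 R) (hR : 1 ≤ R) {a b : κ} (ha : a ∈ s) (hb : b ∈ s)
    (hab : a ≠ b) : ∏ x ∈ s, f x ≤ f a * f b * R ^ s.card := by
  classical
  have hb' : b ∈ s.erase a := Finset.mem_erase.mpr ⟨hab.symm, hb⟩
  rw [← Finset.mul_prod_erase s f ha, ← Finset.mul_prod_erase _ f hb', ← mul_assoc]
  have h_rest : ∏ x ∈ (s.erase a).erase b, f x ≤ R ^ s.card := by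
    have h_sub : (s.erase a).erase b ⊆ s :=
      (Finset.erase_subset _ _).trans (Finset.erase_subset _ _)
    calc ∏ x ∈ (s.erase a).erase b, f x ≤ ∏ _x ∈ (s.erase a).erase b, R :=
          Finset.prod_le_prod (fun x hx ↦ (hf x (h_sub hx)).1) fun x hx ↦ (hf x (h_sub hx)).2
      _ ≤ R ^ s.card := by
          rw [Finset.prod_const]
          exact pow_le_pow_right₀ hR (Finset.card_le_card h_sub)
  exact mul_le_mul_of_nonneg_left h_rest (mul_nonneg (hf a ha).1 (hf b hb).1)

theorem abs_powerTraceDisc_le {A : Matrix S S ℝ} (hA : A.IsHermitian) {R : ℝ} (hR : 1 ≤ R)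
    (h_diam : ∀ i j, |hA.eigenvalues i - hA.eigenvalues j| ≤ R) {i j : S} (hij : i ≠ j) :
    |powerTraceDisc A| ≤ |hA.eigenvalues i - hA.eigenvalues j| ^ 2 *
      R ^ (Fintype.card S * (Fintype.card S - 1)) := by
  rw [powerTraceDisc_eq_prod_offDiag hA, abs_of_nonneg (Finset.prod_nonneg fun _ _ ↦ abs_nonneg _)]
  have h_prod := prod_le_mul_mul_pow_card (s := Finset.univ.offDiag)
    (f := fun p : S × S ↦ |hA.eigenvalues p.1 - hA.eigenvalues p.2|)
    (fun p _ ↦ ⟨abs_nonneg _, h_diam p.1 p.2⟩) hR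
    (a := (i, j)) (b := (j, i)) (by simpa using hij) (by simpa using hij.symm) (by simp [hij])
  rwa [abs_sub_comm (hA.eigenvalues j), ← sq, Finset.offDiag_card, Finset.card_univ,
    ← Nat.mul_sub_one] at h_prod

open MvPolynomial

variable {ι R : Type*}

theorem totalDegree_pow_apply_le [CommSemiring R] {P : Matrix S S (MvPolynomial ι R)} {m : ℕ}
    (hP : ∀ i j, (P i j).totalDegree ≤ m) (k : ℕ) (i j : S) :
    ((P ^ k) i j).totalDegree ≤ k * m := by
  induction k generalizing i j with
  | zero =>
    rw [pow_zero, one_apply]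
    split_ifs <;> simp
  | succ k ih =>
    rw [pow_succ, mul_apply, add_one_mul]
    refine totalDegree_finsetSum_le fun l _ ↦ (totalDegree_mul _ _).trans ?_
    exact add_le_add (ih i l) (hP l j)

variable [CommRing R]

theorem totalDegree_det_le {M : Matrix S S (MvPolynomial ι R)} {a b : S → ℕ}
    (hM : ∀ i j, (M i j).totalDegree ≤ a i + b j) :
    M.det.totalDegree ≤ ∑ i, (a i + b i) := by
  rw [det_apply]
  refine totalDegree_finsetSum_le fun σ _ ↦ ?_
  calc (Equiv.Perm.sign σ • ∏ i, M (σ i) i).totalDegree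
      = (∏ i, M (σ i) i).totalDegree := by
        obtain h_sign | h_sign := Int.units_eq_one_or (Equiv.Perm.sign σ)
        · rw [h_sign, one_smul]
        · rw [h_sign, Units.neg_smul, one_smul, totalDegree_neg]
    _ ≤ ∑ i, (M (σ i) i).totalDegree := totalDegree_finsetProd _ _
    _ ≤ ∑ i, (a (σ i) + b i) := Finset.sum_le_sum fun i _ ↦ hM _ _
    _ = ∑ i, (a i + b i) := by
        rw [Finset.sum_add_distrib, Finset.sum_add_distrib, Equiv.sum_comp σ a]

theorem totalDegree_powerTraceDisc_le {P : Matrix S S (MvPolynomial ι R)} {m : ℕ}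
    (hP : ∀ i j, (P i j).totalDegree ≤ m) :
    (powerTraceDisc P).totalDegree ≤ Fintype.card S * (Fintype.card S - 1) * m := by
  have h_trace (k l : Fin (Fintype.card S)) :
      (trace (P ^ (k + l : ℕ))).totalDegree ≤ k * m + l * m :=
    totalDegree_finsetSum_le fun i _ ↦
      (totalDegree_pow_apply_le hP _ i i).trans_eq (add_mul _ _ _)
  refine (totalDegree_det_le h_trace).trans_eq ?_
  rw [← Finset.sum_range_id_mul_two, Finset.sum_mul, Finset.sum_mul,
    Fin.sum_univ_eq_sum_range fun k ↦ k * m + k * m]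
  exact Finset.sum_congr rfl fun k _ ↦ by ring

end Discriminant

section Spectral

open scoped Matrix.Norms.L2Operator InnerProductSpace

theorem exists_ne_zero_inner_eq_zero {𝕜 S E : Type*} [RCLike 𝕜] [NormedAddCommGroup E]
    [InnerProductSpace 𝕜 E] {b : S → E} (hb : Orthonormal 𝕜 b) {i j : S} (hij : i ≠ j) (v : E) :
    ∃ w ≠ 0, ⟪v, w⟫_𝕜 = 0 ∧ ∀ s, ⟪b s, w⟫_𝕜 ≠ 0 → s = i ∨ s = j := by
  by_cases hv : ⟪v, b j⟫_𝕜 = 0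
  · refine ⟨b j, hb.ne_zero j, hv, fun s hs ↦ .inr ?_⟩
    by_contra h
    exact hs (hb.inner_eq_zero h)
  · refine ⟨⟪v, b j⟫_𝕜 • b i - ⟪v, b i⟫_𝕜 • b j, fun h ↦ hv ?_, ?_, fun s hs ↦ ?_⟩
    · have := congrArg (⟪b i, ·⟫_𝕜) h
      simpa [inner_sub_right, inner_smul_right, hb.inner_eq_zero hij, hb.norm_eq_one i] using this
    · rw [inner_sub_right, inner_smul_right, inner_smul_right, mul_comm, sub_self]
    · contrapose! hs
      rw [inner_sub_right, inner_smul_right, inner_smul_right, hb.inner_eq_zero hs.1,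
        hb.inner_eq_zero hs.2, mul_zero, mul_zero, sub_zero]

variable {𝕜 S : Type*} [RCLike 𝕜] [Fintype S] [DecidableEq S] {A B : Matrix S S 𝕜}

theorem norm_eq_norm_eigenvalues (hA : A.IsHermitian) : ‖A‖ = ‖hA.eigenvalues‖ := by
  conv_lhs =>
    rw [hA.spectral_theorem, Unitary.conjStarAlgAut_apply, ← Unitary.coe_star,
      CStarRing.norm_mul_coe_unitary, CStarRing.norm_coe_unitary_mul, l2_opNorm_diagonal]
  simp [Pi.norm_def, Function.comp_def]

theorem abs_eigenvalues_le_norm (hA : A.IsHermitian) (i : S) : |hA.eigenvalues i| ≤ ‖A‖ := by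
  rw [norm_eq_norm_eigenvalues hA]
  exact norm_le_pi_norm hA.eigenvalues i

theorem toEuclideanCLM_eigenvectorBasis (hA : A.IsHermitian) (i : S) :
    toEuclideanCLM (𝕜 := 𝕜) A (hA.eigenvectorBasis i) =
      (hA.eigenvalues i : 𝕜) • hA.eigenvectorBasis i := by
  refine PiLp.ext fun s ↦ ?_
  have := congrFun (hA.mulVec_eigenvectorBasis i) s
  simpa [ofLp_toEuclideanCLM, RCLike.real_smul_eq_coe_mul] using this

theorem norm_le_of_sum_norm_le (hA : A.IsHermitian) {R : ℝ} (hR : 0 ≤ R)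
    (h_row : ∀ i, ∑ j, ‖A i j‖ ≤ R) : ‖A‖ ≤ R := by
  rw [norm_eq_norm_eigenvalues hA, pi_norm_le_iff_of_nonneg hR]
  intro i
  have h_eigen : Module.End.HasEigenvalue (toLin' A) (hA.eigenvalues i : 𝕜) := by
    rw [Module.End.hasEigenvalue_iff_mem_spectrum, spectrum_toLin']
    exact hA.eigenvalues_mem_spectrum_real i
  obtain ⟨k, hk⟩ := eigenvalue_mem_ball h_eigen
  rw [mem_closedBall_iff_norm] at hk
  calc ‖hA.eigenvalues i‖ = ‖(hA.eigenvalues i : 𝕜)‖ := (RCLike.norm_ofReal _).symm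
    _ ≤ ‖A k k‖ + ‖(hA.eigenvalues i : 𝕜) - A k k‖ := norm_le_norm_add_norm_sub' _ _
    _ ≤ ‖A k k‖ + ∑ j ∈ Finset.univ.erase k, ‖A k j‖ := by gcongr
    _ = ∑ j, ‖A k j‖ := Finset.add_sum_erase _ (‖A k ·‖) (Finset.mem_univ k)
    _ ≤ R := h_row k

theorem norm_toEuclideanCLM_sub_smul_sq (hA : A.IsHermitian) (μ : ℝ) (w : EuclideanSpace 𝕜 S) :
    ‖toEuclideanCLM (𝕜 := 𝕜) A w - (μ : 𝕜) • w‖ ^ 2 =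
      ∑ s, (|hA.eigenvalues s - μ| * ‖⟪hA.eigenvectorBasis s, w⟫_𝕜‖) ^ 2 := by
  rw [← hA.eigenvectorBasis.sum_sq_norm_inner_right]
  refine Finset.sum_congr rfl fun s _ ↦ ?_
  have h_symm : ⟪hA.eigenvectorBasis s, toEuclideanCLM (𝕜 := 𝕜) A w⟫_𝕜 =
      hA.eigenvalues s * ⟪hA.eigenvectorBasis s, w⟫_𝕜 := by
    rw [← RCLike.conj_ofReal (hA.eigenvalues s), ← inner_smul_left,
      ← toEuclideanCLM_eigenvectorBasis hA]
    exact (isSymmetric_toEuclideanLin_iff.mpr hA _ w).symm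
  rw [inner_sub_right, h_symm, inner_smul_right, ← sub_mul, norm_mul, ← RCLike.ofReal_sub,
    RCLike.norm_ofReal]

theorem mul_norm_le_norm_toEuclideanCLM_sub_smul (hA : A.IsHermitian) {μ r : ℝ}
    {w : EuclideanSpace 𝕜 S}
    (hw : ∀ s, ⟪hA.eigenvectorBasis s, w⟫_𝕜 ≠ 0 → r ≤ |hA.eigenvalues s - μ|) :
    r * ‖w‖ ≤ ‖toEuclideanCLM (𝕜 := 𝕜) A w - (μ : 𝕜) • w‖ := by
  obtain hr | hr := lt_or_ge r 0
  · exact (mul_nonpos_of_nonpos_of_nonneg hr.le (norm_nonneg w)).trans (norm_nonneg _)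
  refine le_of_sq_le_sq ?_ (norm_nonneg _)
  rw [norm_toEuclideanCLM_sub_smul_sq hA, mul_pow,
    ← hA.eigenvectorBasis.sum_sq_norm_inner_right, Finset.mul_sum]
  refine Finset.sum_le_sum fun s _ ↦ ?_
  rw [← mul_pow]
  by_cases hs : ⟪hA.eigenvectorBasis s, w⟫_𝕜 = 0
  · simp [hs]
  · gcongr
    exact hw s hs

theorem norm_toEuclideanCLM_sub_smul_le (hA : A.IsHermitian) {μ r : ℝ} (hr : 0 ≤ r)
    {w : EuclideanSpace 𝕜 S}
    (hw : ∀ s, ⟪hA.eigenvectorBasis s, w⟫_𝕜 ≠ 0 → |hA.eigenvalues s - μ| ≤ r) :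
    ‖toEuclideanCLM (𝕜 := 𝕜) A w - (μ : 𝕜) • w‖ ≤ r * ‖w‖ := by
  refine le_of_sq_le_sq ?_ (by positivity)
  rw [norm_toEuclideanCLM_sub_smul_sq hA, mul_pow,
    ← hA.eigenvectorBasis.sum_sq_norm_inner_right, Finset.mul_sum]
  refine Finset.sum_le_sum fun s _ ↦ ?_
  rw [← mul_pow]
  by_cases hs : ⟪hA.eigenvectorBasis s, w⟫_𝕜 = 0
  · simp [hs]
  · gcongr
    exact hw s hs

-- If two eigenvalues of `A` were too close to their midpoint `μ`, the plane of their eigenvectors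
-- would contain a vector orthogonal to the eigenvector of the eigenvalue of `B` nearest to `μ`.
theorem pairwise_le_abs_eigenvalues_sub (hA : A.IsHermitian) (hB : B.IsHermitian) {g : ℝ}
    (h_gap : Pairwise fun i j ↦ g ≤ |hB.eigenvalues i - hB.eigenvalues j|) :
    Pairwise fun i j ↦ g - 2 * ‖A - B‖ ≤ |hA.eigenvalues i - hA.eigenvalues j| := by
  intro i j hij
  set μ : ℝ := (hA.eigenvalues i + hA.eigenvalues j) / 2 with hμ
  set r : ℝ := |(hA.eigenvalues i - hA.eigenvalues j) / 2| with hr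
  have : Nonempty S := ⟨i⟩
  obtain ⟨k, hk⟩ := Finite.exists_min fun s ↦ |hB.eigenvalues s - μ|
  obtain ⟨w, hw, hkw, hijw⟩ := exists_ne_zero_inner_eq_zero
    hA.eigenvectorBasis.orthonormal hij (hB.eigenvectorBasis k)
  have h_lower : g / 2 * ‖w‖ ≤ ‖toEuclideanCLM (𝕜 := 𝕜) B w - (μ : 𝕜) • w‖ := by
    refine mul_norm_le_norm_toEuclideanCLM_sub_smul hB fun s hs ↦ ?_
    have hsk : s ≠ k := by
      rintro rfl
      exact hs hkw
    have := abs_sub_le (hB.eigenvalues s) μ (hB.eigenvalues k)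
    rw [abs_sub_comm μ] at this
    linarith [h_gap hsk, hk s]
  have h_upper : ‖toEuclideanCLM (𝕜 := 𝕜) A w - (μ : 𝕜) • w‖ ≤ r * ‖w‖ := by
    refine norm_toEuclideanCLM_sub_smul_le hA (by positivity) fun s hs ↦ ?_
    obtain rfl | rfl := hijw s hs
    · exact (congrArg _ (by rw [hμ]; ring)).le
    · exact ((abs_sub_comm _ _).trans (congrArg _ (by rw [hμ]; ring))).le
  have h_pert : ‖toEuclideanCLM (𝕜 := 𝕜) A w - toEuclideanCLM (𝕜 := 𝕜) B w‖ ≤ ‖A - B‖ * ‖w‖ := by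
    rw [← _root_.sub_apply, ← map_sub, ← l2_opNorm_toEuclideanCLM]
    exact ContinuousLinearMap.le_opNorm _ _
  have h_mul : g / 2 * ‖w‖ ≤ (r + ‖A - B‖) * ‖w‖ := by
    have := norm_sub_le_norm_sub_add_norm_sub (toEuclideanCLM (𝕜 := 𝕜) B w)
      (toEuclideanCLM (𝕜 := 𝕜) A w) ((μ : 𝕜) • w)
    rw [norm_sub_rev (toEuclideanCLM (𝕜 := 𝕜) B w) (toEuclideanCLM (𝕜 := 𝕜) A w)] at this
    linarith
  have := le_of_mul_le_mul_right h_mul (norm_pos_iff.mpr hw)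
  rw [hr, abs_div, abs_two] at this
  linarith

end Spectral

section Charpoly

theorem charpoly_blockDiagonal {R m o : Type*} [CommRing R] [Fintype m] [DecidableEq m]
    [Fintype o] [DecidableEq o] (M : o → Matrix m m R) :
    (blockDiagonal M).charpoly = ∏ k, (M k).charpoly := by
  have h_scalar : scalar (m × o) (Polynomial.X : Polynomial R) =
      blockDiagonal fun _ ↦ scalar m Polynomial.X := by
    simp [blockDiagonal_diagonal]
  simp only [charpoly]
  rw [charmatrix, h_scalar, RingHom.mapMatrix_apply, blockDiagonal_map _ _ (map_zero _),
    ← blockDiagonal_sub, det_blockDiagonal]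
  rfl

variable {S T : Type*} [Fintype S] [DecidableEq S] [Fintype T] {A : Matrix S S ℝ} {v : T → ℝ}

theorem map_eigenvalues_eq_of_charpoly_eq (hA : A.IsHermitian)
    (hv : A.charpoly = ∏ t, (Polynomial.X - Polynomial.C (v t))) :
    Finset.univ.val.map hA.eigenvalues = Finset.univ.val.map v := by
  have h_roots := hA.roots_charpoly_eq_eigenvalues
  have h_prod := Polynomial.roots_multiset_prod_X_sub_C (Finset.univ.val.map v)
  rw [Multiset.map_map] at h_prod
  rw [hv] at h_roots
  exact h_roots.symm.trans h_prod

theorem exists_eigenvalues_eq_of_charpoly_eq (hA : A.IsHermitian)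
    (hv : A.charpoly = ∏ t, (Polynomial.X - Polynomial.C (v t))) (i : S) :
    ∃ t, v t = hA.eigenvalues i := by
  have h_mem : hA.eigenvalues i ∈ Finset.univ.val.map v := by
    rw [← map_eigenvalues_eq_of_charpoly_eq hA hv]
    exact Multiset.mem_map_of_mem _ (Finset.mem_univ_val i)
  simpa using h_mem

theorem eigenvalues_injective_of_charpoly_eq (hA : A.IsHermitian)
    (hv : A.charpoly = ∏ t, (Polynomial.X - Polynomial.C (v t))) (h_inj : v.Injective) :
    hA.eigenvalues.Injective := by
  have h_nodup : (Finset.univ.val.map hA.eigenvalues).Nodup := by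
    rw [map_eigenvalues_eq_of_charpoly_eq hA hv]
    exact Finset.univ.nodup.map h_inj
  exact fun i j ↦ Multiset.inj_on_of_nodup_map h_nodup i (Finset.mem_univ_val i) j
    (Finset.mem_univ_val j)

theorem pairwise_le_abs_eigenvalues_sub_of_charpoly_eq (hA : A.IsHermitian)
    (hv : A.charpoly = ∏ t, (Polynomial.X - Polynomial.C (v t))) {g : ℝ} (hg : 0 < g)
    (h_gap : Pairwise fun s t ↦ g ≤ |v s - v t|) :
    Pairwise fun i j ↦ g ≤ |hA.eigenvalues i - hA.eigenvalues j| := by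
  have h_inj : v.Injective := by
    intro s t hst
    by_contra h_ne
    have h_le : g ≤ |v s - v t| := h_gap h_ne
    rw [hst, sub_self, abs_zero] at h_le
    exact hg.not_ge h_le
  intro i j hij
  obtain ⟨s, hs⟩ := exists_eigenvalues_eq_of_charpoly_eq hA hv i
  obtain ⟨t, ht⟩ := exists_eigenvalues_eq_of_charpoly_eq hA hv j
  rw [← hs, ← ht]
  refine h_gap ?_
  rintro rfl
  exact hij (eigenvalues_injective_of_charpoly_eq hA hv h_inj (hs.symm.trans ht))

end Charpoly

section SiteHam

open scoped Matrix.Norms.L2Operator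

variable {X : Type*}

/-- The eigenvalues `±√(1 + u x ^ 2)` of the blocks `[[u x, 1], [1, -u x]]`, with the sign `+` at
index `(x, 0)` and `-` at index `(x, 1)`. -/
noncomputable def siteLevel (u : X → ℝ) (s : X × Fin 2) : ℝ :=
  ![√(1 + u s.1 ^ 2), -√(1 + u s.1 ^ 2)] s.2

theorem sqrt_one_add_two_mul_sq_add_le {k l : ℕ} (hkl : k < l) :
    √(1 + (2 * k) ^ 2) + 6 / 5 ≤ √(1 + (2 * l) ^ 2) := by
  have h_cast : (k : ℝ) + 1 ≤ l := mod_cast hkl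
  have h_sqrt : √(1 + (2 * k) ^ 2) ≤ 1 + 2 * (k : ℝ) :=
    Real.sqrt_le_iff.mpr ⟨by positivity, by nlinarith [k.cast_nonneg (α := ℝ)]⟩
  refine Real.le_sqrt_of_sq_le ?_
  nlinarith [Real.sq_sqrt (show 0 ≤ 1 + (2 * (k : ℝ)) ^ 2 by positivity)]

theorem pairwise_le_abs_siteLevel_sub {k : X → ℕ} (hk : k.Injective) :
    Pairwise fun s t ↦ 6 / 5 ≤ |siteLevel (fun x ↦ 2 * (k x : ℝ)) s -
      siteLevel (fun x ↦ 2 * (k x : ℝ)) t| := by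
  have h_same {x y : X} (hxy : x ≠ y) :
      6 / 5 ≤ |√(1 + (2 * (k x : ℝ)) ^ 2) - √(1 + (2 * (k y : ℝ)) ^ 2)| := by
    obtain h | h := (hk.ne hxy).lt_or_gt
    · rw [abs_sub_comm]
      exact (le_sub_iff_add_le'.mpr (sqrt_one_add_two_mul_sq_add_le h)).trans (le_abs_self _)
    · exact (le_sub_iff_add_le'.mpr (sqrt_one_add_two_mul_sq_add_le h)).trans (le_abs_self _)
  have h_opposite (x y : X) :
      6 / 5 ≤ |√(1 + (2 * (k x : ℝ)) ^ 2) + √(1 + (2 * (k y : ℝ)) ^ 2)| := by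
    have h_one_le (z : X) : 1 ≤ √(1 + (2 * (k z : ℝ)) ^ 2) :=
      Real.one_le_sqrt.mpr (le_add_of_nonneg_right (sq_nonneg _))
    exact le_trans (by linarith [h_one_le x, h_one_le y]) (le_abs_self _)
  rintro ⟨x, a⟩ ⟨y, b⟩ hst
  fin_cases a <;> fin_cases b <;> simp only [siteLevel]
  · exact h_same fun h ↦ hst (congrArg (·, (0 : Fin 2)) h)
  · simpa using h_opposite x y
  · rw [abs_sub_comm]
    simpa using h_opposite y x
  · rw [abs_sub_comm]
    simpa [← sub_eq_neg_add] using h_same fun h ↦ hst (congrArg (·, (1 : Fin 2)) h)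

variable {R : Type*} [CommRing R] [DecidableEq X]

/-- The block Hamiltonian of isolated sites, with diagonal blocks `[[u x, 1], [1, -u x]]`. The
entries lie in any commutative ring, so that `u` may also consist of polynomial indeterminates. -/
def siteHam (u : X → R) : Matrix (X × Fin 2) (X × Fin 2) R :=
  reindex (Equiv.prodComm _ _) (Equiv.prodComm _ _) (blockDiagonal fun x ↦ !![u x, 1; 1, -u x])

theorem siteHam_apply (u : X → R) (s t : X × Fin 2) :
    siteHam u s t = if s.1 = t.1 then !![u s.1, 1; 1, -u s.1] s.2 t.2 else 0 := rfl

theorem map_siteHam {R' : Type*} [CommRing R'] (φ : R →+* R') (u : X → R) :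
    (siteHam u).map φ = siteHam (φ ∘ u) := by
  ext s t
  rw [map_apply, siteHam_apply, siteHam_apply]
  split_ifs with h
  · obtain ⟨x, i⟩ := s
    obtain ⟨y, j⟩ := t
    fin_cases i <;> fin_cases j <;> simp
  · simp

theorem siteHam_isHermitian (u : X → ℝ) : (siteHam u).IsHermitian := by
  have h_block (x : X) : (!![u x, 1; 1, -u x]).IsHermitian := by
    ext i j
    fin_cases i <;> fin_cases j <;> simp
  exact (isHermitian_blockDiagonal_iff.mpr h_block).submatrix _

variable [Fintype X]

open Polynomial in
theorem charpoly_siteHam (u : X → ℝ) :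
    (siteHam u).charpoly = ∏ s, (Polynomial.X - C (siteLevel u s)) := by
  rw [siteHam, charpoly_reindex, charpoly_blockDiagonal, Fintype.prod_prod_type]
  refine Finset.prod_congr rfl fun x _ ↦ ?_
  have h_sq : C (√(1 + u x ^ 2)) ^ 2 = C (1 + u x ^ 2) := by
    rw [← C_pow, Real.sq_sqrt (by positivity)]
  have h_block : (!![u x, 1; 1, -u x]).charpoly = Polynomial.X ^ 2 - C (1 + u x ^ 2) := by
    rw [charpoly_fin_two, trace_fin_two_of, det_fin_two_of]
    simp only [add_neg_cancel, map_zero, zero_mul, sub_zero, map_sub, map_add, map_mul, map_neg,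
      map_one, map_pow]
    ring
  rw [h_block, ← h_sq, Fin.prod_univ_two]
  simp only [siteLevel, cons_val_zero, cons_val_one, C_neg]
  ring

theorem norm_siteHam_le {u : X → ℝ} (hu : ∀ x, u x ∈ Set.Icc (-1) 1) :
    ‖siteHam u‖ ≤ √2 := by
  rw [norm_eq_norm_eigenvalues (siteHam_isHermitian u), pi_norm_le_iff_of_nonneg (by positivity)]
  intro i
  obtain ⟨⟨x, a⟩, hs⟩ :=
    exists_eigenvalues_eq_of_charpoly_eq (siteHam_isHermitian u) (charpoly_siteHam u) i
  have h_sqrt : √(1 + u x ^ 2) ≤ √2 :=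
    Real.sqrt_le_sqrt (by linarith [(sq_le_one_iff_abs_le_one (u x)).mpr (abs_le.mpr (hu x))])
  rw [← hs]
  fin_cases a <;> simpa [siteLevel, abs_of_nonneg (Real.sqrt_nonneg _)] using h_sqrt

end SiteHam

section LevelSpacing

open scoped Matrix.Norms.L2Operator

variable {X : Type*} [Fintype X] [DecidableEq X]

theorem one_le_powerTraceDisc_siteHam_add {V : Matrix (X × Fin 2) (X × Fin 2) ℝ}
    (hV : V.IsHermitian) (hV_norm : ‖V‖ ≤ 1 / 10) {k : X → ℕ} (hk : k.Injective) :
    1 ≤ powerTraceDisc (siteHam (fun x ↦ 2 * (k x : ℝ)) + V) := by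
  have h_site := siteHam_isHermitian fun x ↦ 2 * (k x : ℝ)
  have h_gap := pairwise_le_abs_eigenvalues_sub_of_charpoly_eq h_site (charpoly_siteHam _)
    (by norm_num) (pairwise_le_abs_siteLevel_sub hk)
  refine one_le_powerTraceDisc (h_site.add hV) fun i j hij ↦ ?_
  have := pairwise_le_abs_eigenvalues_sub (h_site.add hV) h_site h_gap hij
  rw [add_sub_cancel_left] at this
  linarith

theorem abs_eigenvalues_siteHam_add_sub_le {V : Matrix (X × Fin 2) (X × Fin 2) ℝ}
    (hV : V.IsHermitian) (hV_norm : ‖V‖ ≤ 1 / 20) {u : X → ℝ} (hu : ∀ x, u x ∈ Set.Icc (-1) 1)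
    (i j : X × Fin 2) :
    |((siteHam_isHermitian u).add hV).eigenvalues i -
      ((siteHam_isHermitian u).add hV).eigenvalues j| ≤ 3 := by
  set hM := (siteHam_isHermitian u).add hV
  have h_norm : ‖siteHam u + V‖ ≤ 3 / 2 := by
    have : √2 ≤ 29 / 20 := Real.sqrt_le_iff.mpr (by norm_num)
    linarith [norm_add_le (siteHam u) V, norm_siteHam_le hu]
  calc |hM.eigenvalues i - hM.eigenvalues j|
      ≤ |hM.eigenvalues i| + |hM.eigenvalues j| := abs_sub _ _
    _ ≤ ‖siteHam u + V‖ + ‖siteHam u + V‖ :=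
        add_le_add (abs_eigenvalues_le_norm hM i) (abs_eigenvalues_le_norm hM j)
    _ ≤ 3 := by linarith

/-- The discriminant of `siteHam u + V`, as a polynomial in `u`. -/
noncomputable def siteDisc (V : Matrix (X × Fin 2) (X × Fin 2) ℝ) : MvPolynomial X ℝ :=
  powerTraceDisc (siteHam MvPolynomial.X + V.map MvPolynomial.C)

theorem eval_siteDisc (V : Matrix (X × Fin 2) (X × Fin 2) ℝ) (u : X → ℝ) :
    MvPolynomial.eval u (siteDisc V) = powerTraceDisc (siteHam u + V) := by
  have h_site : MvPolynomial.eval u ∘ MvPolynomial.X = u := by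
    ext x
    simp
  have h_const : MvPolynomial.eval u ∘ MvPolynomial.C = id := by
    ext x
    simp
  rw [siteDisc, map_powerTraceDisc, Matrix.map_add _ (map_add _), map_siteHam, h_site, map_map,
    h_const, map_id]

theorem totalDegree_siteDisc_le (V : Matrix (X × Fin 2) (X × Fin 2) ℝ) :
    (siteDisc V).totalDegree ≤ 2 * Fintype.card X * (2 * Fintype.card X - 1) := by
  have h_entry (s t : X × Fin 2) :
      ((siteHam MvPolynomial.X + V.map MvPolynomial.C : Matrix _ _ (MvPolynomial X ℝ)) s
        t).totalDegree ≤ 1 := by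
    rw [Matrix.add_apply, siteHam_apply, map_apply]
    refine (MvPolynomial.totalDegree_add _ _).trans (max_le ?_ ?_)
    · split_ifs
      · obtain ⟨x, a⟩ := s
        obtain ⟨y, b⟩ := t
        fin_cases a <;> fin_cases b <;> simp
      · simp
    · simp
  have h_deg := totalDegree_powerTraceDisc_le h_entry
  rwa [mul_one, Fintype.card_prod, Fintype.card_fin, mul_comm _ 2] at h_deg

theorem unifPi_abs_eval_siteDisc_le [Nonempty X] {V : Matrix (X × Fin 2) (X × Fin 2) ℝ}
    (hV : V.IsHermitian) (hV_norm : ‖V‖ ≤ 1 / 10) {ε : ℝ} (hε : 0 < ε) :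
    unifPi X {u | |MvPolynomial.eval u (siteDisc V)| ≤ ε} ≤
      ENNReal.ofReal (2 * (ε ^ (1 / (4 * (Fintype.card X : ℝ) ^ 2)) * (1 + 4 * Fintype.card X)) *
        (2 * Fintype.card X) ^ Fintype.card X) := by
  set n := Fintype.card X
  have hn : 1 ≤ (n : ℝ) := mod_cast Fintype.card_pos (α := X)
  let k : X → ℕ := fun x ↦ Fintype.equivFin X x
  have hk : k.Injective := Fin.val_injective.comp (Fintype.equivFin X).injective
  have h_ref : 1 ≤ |MvPolynomial.eval (fun x ↦ 2 * (k x : ℝ)) (siteDisc V)| := by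
    rw [eval_siteDisc]
    exact (one_le_powerTraceDisc_siteHam_add hV hV_norm hk).trans (le_abs_self _)
  have hk_le (x : X) : 2 * (k x : ℝ) ∈ Set.Icc 0 (2 * ((n : ℝ) - 1)) := by
    have : (k x : ℝ) + 1 ≤ n := mod_cast (Fintype.equivFin X x).isLt
    exact ⟨by positivity, by linarith⟩
  have h_exp : 1 / (4 * (n : ℝ) ^ 2) * (2 * n * (2 * n - 1) : ℕ) = 1 - 1 / (2 * n) := by
    rw [Nat.cast_mul, Nat.cast_pred (mul_pos two_pos Fintype.card_pos)]
    push_cast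
    field_simp
    ring
  have h_const : 1 + 2 / (1 - (1 - 1 / (2 * (n : ℝ)))) = 1 + 4 * n := by
    field_simp
    ring
  have h_main := unifPi_abs_eval_le (abs_pos.mp (one_pos.trans_le h_ref)) (by linarith) hk_le
    (by positivity) (totalDegree_siteDisc_le V)
    (h_exp.trans_lt (sub_lt_self _ (by positivity))) hε
  rw [h_exp, h_const, show 2 + 2 * ((n : ℝ) - 1) = 2 * n by ring] at h_main
  exact (measure_mono fun u hu ↦ hu.trans (le_mul_of_one_le_right hε.le h_ref)).trans h_main

theorem sq_mul_three_pow_rpow_le {n : ℕ} (hn : 0 < n) {δ : ℝ} (hδ : 0 ≤ δ) :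
    (δ ^ 2 * 3 ^ (2 * n * (2 * n - 1))) ^ (1 / (4 * (n : ℝ) ^ 2)) ≤
      δ ^ (1 / (2 * (n : ℝ) ^ 2)) * 3 := by
  have h_exp : 2 * (1 / (4 * (n : ℝ) ^ 2)) = 1 / (2 * (n : ℝ) ^ 2) := by
    field_simp
    norm_num
  have h_three : (3 : ℝ) ^ (2 * n * (2 * n - 1)) ≤ 3 ^ (4 * (n : ℝ) ^ 2) := by
    rw [show 4 * (n : ℝ) ^ 2 = (2 * n * (2 * n) : ℕ) by push_cast; ring, Real.rpow_natCast]
    exact pow_le_pow_right₀ (by norm_num) (Nat.mul_le_mul_left _ (Nat.sub_le _ _))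
  calc _ ≤ (δ ^ (2 : ℝ) * 3 ^ (4 * (n : ℝ) ^ 2)) ^ (1 / (4 * (n : ℝ) ^ 2)) := by
        rw [Real.rpow_two]
        gcongr
    _ = _ := by
        rw [Real.mul_rpow (by positivity) (by positivity), ← Real.rpow_mul hδ, h_exp,
          ← Real.rpow_mul (by norm_num), mul_one_div_cancel (by positivity), Real.rpow_one]

theorem six_mul_one_add_mul_pow_le {n : ℕ} (hn : 0 < n) :
    6 * (1 + 4 * n) * (2 * n : ℝ) ^ n ≤ 4 * (4 * n) ^ (n + 1) := by
  have h_one : (1 : ℝ) ≤ n := mod_cast hn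
  have h_two : (2 : ℝ) ≤ 2 ^ n := le_self_pow₀ one_le_two hn.ne'
  calc 6 * (1 + 4 * n) * (2 * n : ℝ) ^ n ≤ 16 * n * 2 ^ n * (2 * n) ^ n := by
        refine mul_le_mul_of_nonneg_right ?_ (by positivity)
        nlinarith
    _ = 4 * (4 * n) ^ (n + 1) := by
        rw [mul_assoc, ← mul_pow, pow_succ]
        ring

theorem two_mul_sq_mul_three_pow_rpow_mul_le {n : ℕ} (hn : 0 < n) {δ : ℝ} (hδ : 0 ≤ δ) :
    2 * ((δ ^ 2 * 3 ^ (2 * n * (2 * n - 1))) ^ (1 / (4 * (n : ℝ) ^ 2)) * (1 + 4 * n)) *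
      (2 * n) ^ n ≤ δ ^ (1 / (2 * (n : ℝ) ^ 2)) * (4 * (4 * n) ^ (n + 1)) := by
  calc _ ≤ 2 * (δ ^ (1 / (2 * (n : ℝ) ^ 2)) * 3 * (1 + 4 * n)) * (2 * n) ^ n := by
        gcongr
        exact sq_mul_three_pow_rpow_le hn hδ
    _ = δ ^ (1 / (2 * (n : ℝ) ^ 2)) * (6 * (1 + 4 * n) * (2 * n) ^ n) := by ring
    _ ≤ _ := by
        gcongr ?_ * ?_
        exact six_mul_one_add_mul_pow_le hn

theorem block_level_spacing_general {V : Matrix (X × Fin 2) (X × Fin 2) ℝ} (hV : V.IsHermitian)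
    (hV_norm : opNorm V ≤ 1 / 20) {δ : ℝ} (hδ : 0 < δ) :
    unifPi X {u | ∃ i j : X × Fin 2, i ≠ j ∧
        |((siteHam_isHermitian u).add hV).eigenvalues i -
          ((siteHam_isHermitian u).add hV).eigenvalues j| < δ} ≤
      ENNReal.ofReal (δ ^ (1 / (2 * (Fintype.card X : ℝ) ^ 2)) *
        (4 * (4 * Fintype.card X) ^ (Fintype.card X + 1))) := by
  obtain h_empty | h_nonempty := isEmpty_or_nonempty X
  · simp
  set n := Fintype.card X
  let ε : ℝ := δ ^ 2 * 3 ^ (2 * n * (2 * n - 1))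
  have h_event : ∀ᵐ u ∂unifPi X, (∃ i j : X × Fin 2, i ≠ j ∧
      |((siteHam_isHermitian u).add hV).eigenvalues i -
        ((siteHam_isHermitian u).add hV).eigenvalues j| < δ) →
      |MvPolynomial.eval u (siteDisc V)| ≤ ε := by
    filter_upwards [ae_unifPi_mem_Icc] with u hu
    rintro ⟨i, j, hij, h_lt⟩
    have h_disc := abs_powerTraceDisc_le ((siteHam_isHermitian u).add hV) (by norm_num)
      (abs_eigenvalues_siteHam_add_sub_le hV hV_norm hu) hij
    rw [Fintype.card_prod, Fintype.card_fin, mul_comm (Fintype.card X) 2] at h_disc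
    rw [eval_siteDisc]
    refine h_disc.trans ?_
    dsimp only [ε, n]
    gcongr
  calc _ ≤ unifPi X {u | |MvPolynomial.eval u (siteDisc V)| ≤ ε} := measure_mono_ae h_event
    _ ≤ _ := unifPi_abs_eval_siteDisc_le hV (hV_norm.trans (by norm_num)) (by positivity)
    _ ≤ _ := ENNReal.ofReal_le_ofReal
        (two_mul_sq_mul_three_pow_rpow_mul_le Fintype.card_pos hδ.le)

end LevelSpacing

section Lattice

open scoped Matrix.Norms.L2Operator Kronecker

theorem adjMatrix_kronecker_one_isHermitian {V ι : Type*} [DecidableEq ι] (G : SimpleGraph V)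
    [DecidableRel G.Adj] : (G.adjMatrix ℝ ⊗ₖ (1 : Matrix ι ι ℝ)).IsHermitian := by
  rw [IsHermitian, conjTranspose_kronecker, conjTranspose_one, G.isHermitian_adjMatrix ℝ]

theorem norm_adjMatrix_kronecker_one_le {V ι : Type*} [Fintype V] [DecidableEq V] [Fintype ι]
    [DecidableEq ι] (G : SimpleGraph V) [DecidableRel G.Adj] {Δ : ℕ} (hG : ∀ x, G.degree x ≤ Δ) :
    ‖G.adjMatrix ℝ ⊗ₖ (1 : Matrix ι ι ℝ)‖ ≤ Δ := by
  refine norm_le_of_sum_norm_le (adjMatrix_kronecker_one_isHermitian G) Δ.cast_nonneg fun s ↦ ?_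
  calc ∑ t, ‖(G.adjMatrix ℝ ⊗ₖ (1 : Matrix ι ι ℝ)) s t‖ = G.degree s.1 := by
        simp [Fintype.sum_prod_type, one_apply, SimpleGraph.adjMatrix_apply, apply_ite,
          ← SimpleGraph.card_neighborFinset_eq_degree, SimpleGraph.neighborFinset_eq_filter]
    _ ≤ Δ := mod_cast hG s.1

variable {d : ℕ}

theorem exists_update_eq_of_dist1_eq_one {x y : Fin d → ℤ} (h : dist1 x y = 1) :
    ∃ i, ∃ e : ℤˣ, Function.update x i (x i + e) = y := by
  obtain ⟨i, -, hi⟩ : ∃ i ∈ Finset.univ, (x i - y i).natAbs ≠ 0 :=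
    Finset.exists_ne_zero_of_sum_ne_zero (h.trans_ne one_ne_zero)
  rw [dist1, ← Finset.add_sum_erase _ _ (Finset.mem_univ i)] at h
  have h_other : ∑ j ∈ Finset.univ.erase i, (x j - y j).natAbs = 0 := by lia
  have h_unit : IsUnit (y i - x i) := Int.isUnit_iff_natAbs_eq.mpr (by lia)
  refine ⟨i, h_unit.unit, (Function.eq_update_iff.mpr ⟨by simp, fun j hj ↦ ?_⟩).symm⟩
  have := Finset.sum_eq_zero_iff.mp h_other j (Finset.mem_erase.mpr ⟨hj, Finset.mem_univ j⟩)
  lia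

/-- The nearest-neighbor graph of `ℤ^d`, restricted to `B`. -/
def nearestNeighborGraph (B : Finset (Fin d → ℤ)) : SimpleGraph {x // x ∈ B} where
  Adj x y := dist1 x.1 y.1 = 1
  symm := ⟨fun x y ↦ by simp [dist1, ← Int.natAbs_neg (x.1 _ - y.1 _)]⟩
  loopless := ⟨fun x ↦ by simp [dist1]⟩

instance (B : Finset (Fin d → ℤ)) : DecidableRel (nearestNeighborGraph B).Adj :=
  fun x y ↦ inferInstanceAs (Decidable (dist1 x.1 y.1 = 1))

theorem degree_nearestNeighborGraph_le (B : Finset (Fin d → ℤ)) (x : {x // x ∈ B}) :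
    (nearestNeighborGraph B).degree x ≤ 2 * d := by
  let step (p : Fin d × ℤˣ) : Fin d → ℤ := Function.update x.1 p.1 (x.1 p.1 + p.2)
  calc (nearestNeighborGraph B).degree x
      = (((nearestNeighborGraph B).neighborFinset x).map (.subtype (· ∈ B))).card := by
        rw [Finset.card_map, SimpleGraph.card_neighborFinset_eq_degree]
    _ ≤ (Finset.univ.image step).card := by
        refine Finset.card_le_card fun y hy ↦ ?_
        obtain ⟨z, hz, rfl⟩ := Finset.mem_map.mp hy
        obtain ⟨i, e, he⟩ :=
          exists_update_eq_of_dist1_eq_one ((SimpleGraph.mem_neighborFinset _ _ _).mp hz)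
        exact Finset.mem_image.mpr ⟨(i, e), Finset.mem_univ _, he⟩
    _ ≤ Fintype.card (Fin d × ℤˣ) := Finset.card_image_le
    _ = 2 * d := by rw [Fintype.card_prod, Fintype.card_fin, Fintype.card_units_int, mul_comm]

/-- The off-diagonal part of `Ham d 1 B u`: the nearest-neighbor hopping on `B`, acting trivially on
the two internal states. -/
def hopping (B : Finset (Fin d → ℤ)) : Matrix ({x // x ∈ B} × Fin 2) ({x // x ∈ B} × Fin 2) ℝ :=
  (nearestNeighborGraph B).adjMatrix ℝ ⊗ₖ 1

theorem hopping_isHermitian (B : Finset (Fin d → ℤ)) : (hopping B).IsHermitian :=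
  adjMatrix_kronecker_one_isHermitian _

theorem norm_hopping_le (B : Finset (Fin d → ℤ)) : ‖hopping B‖ ≤ 2 * d :=
  mod_cast norm_adjMatrix_kronecker_one_le _ (degree_nearestNeighborGraph_le B)

theorem Ham_eq_siteHam_add_smul_hopping (γ : ℝ) (B : Finset (Fin d → ℤ)) (u : {x // x ∈ B} → ℝ) :
    Ham d γ B u = siteHam u + γ • hopping B := by
  ext ⟨x, i⟩ ⟨y, j⟩
  rw [Matrix.add_apply, Matrix.smul_apply, siteHam_apply, hopping, kroneckerMap_apply,
    SimpleGraph.adjMatrix_apply, Matrix.one_apply, Ham]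
  obtain rfl | h_ne := eq_or_ne x y
  · fin_cases i <;> fin_cases j <;> simp
  · split_ifs with h_adj <;> simp_all [nearestNeighborGraph]

theorem opNorm_smul_hopping_add_le {γ : ℝ} (hγ : 0 ≤ γ) (B : Finset (Fin d → ℤ))
    {Ξ : Matrix ({x // x ∈ B} × Fin 2) ({x // x ∈ B} × Fin 2) ℝ} (hΞ : opNorm Ξ ≤ γ) :
    opNorm (γ • hopping B + Ξ) ≤ (2 * d + 1) * γ := by
  calc ‖γ • hopping B + Ξ‖ ≤ ‖γ • hopping B‖ + ‖Ξ‖ := norm_add_le _ _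
    _ ≤ γ * (2 * d) + γ := by
        rw [norm_smul, Real.norm_of_nonneg hγ]
        gcongr
        exacts [norm_hopping_le B, hΞ]
    _ = (2 * d + 1) * γ := by ring

end Lattice

/-- for `M(u) = H_B(u) + Ξ` with `Ξ` fixed symmetric, `‖Ξ‖ ≤ γ`,
`(2d+1)γ ≤ 1/100`, the probability that two eigenvalues of `M(u)` (counted with
multiplicity) are within `δ` of each other is at most `δ^{1/(2n²)}·4·(4n)^{n+1}`. -/
theorem block_level_spacing (d : ℕ) (hd : 1 ≤ d) (γ : ℝ) (hγ : 0 < γ)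
    (hγs : (2 * (d : ℝ) + 1) * γ ≤ 1 / 100)
    (B : Finset (Fin d → ℤ)) (n : ℕ) (hn : n = B.card)
    (Ξ : Matrix ({x // x ∈ B} × Fin 2) ({x // x ∈ B} × Fin 2) ℝ)
    (hΞh : Ξ.IsHermitian) (hΞ : opNorm Ξ ≤ γ)
    (hherm : ∀ u : {x // x ∈ B} → ℝ, (Ham d γ B u + Ξ).IsHermitian)
    (δ : ℝ) (hδ0 : 0 < δ) (hδ1 : δ ≤ 1) :
    unifPi {x // x ∈ B}
        {u | ∃ i j : {x // x ∈ B} × Fin 2, i ≠ j ∧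
          |(hherm u).eigenvalues i - (hherm u).eigenvalues j| < δ} ≤
      ENNReal.ofReal (δ ^ (1 / (2 * (n : ℝ) ^ 2)) * (4 * (4 * n) ^ (n + 1))) := by
  have hV_norm : opNorm (γ • hopping B + Ξ) ≤ 1 / 20 := by
    linarith [opNorm_smul_hopping_add_le hγ.le B hΞ]
  simpa only [Ham_eq_siteHam_add_smul_hopping, add_assoc, Fintype.card_coe, hn] using
    block_level_spacing_general (((hopping_isHermitian B).smul (.all γ)).add hΞh) hV_norm hδ0
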